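/- Delta property of the Lagrange interpolants: for all (a,b), (a',b') ∈ E, the evaluation ev_{a',b'}(λ_{a,b}) equals 1 if (a',b') = (a,b), and equals 0 otherwise. -/

import Mathlib

noncomputable section

open MvPolynomial Quaternion

/-- The ring `R'_q = (ℤ/qℤ)[x,y]/⟨x^n - 1, y^n - 1⟩`. -/
abbrev Rq (q n : ℕ) : Type :=
  MvPolynomial (Fin 2) (ZMod q) ⧸
    (Ideal.span {(X 0 : MvPolynomial (Fin 2) (ZMod q)) ^ n - 1, (X 1 : MvPolynomial (Fin 2) (ZMod q)) ^ n - 1})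

/-- Evaluation `ev_{a,b} : R'_q → ℤ/qℤ` at a point `(a,b)` with `a^n = b^n = 1`. -/
def ev (q n : ℕ) (a b : ZMod q) (ha : a ^ n = 1) (hb : b ^ n = 1) :
    Rq q n →+* ZMod q :=
  Ideal.Quotient.lift _ (MvPolynomial.eval ![a, b])
    (by
      intro f hf
      rw [← RingHom.mem_ker]
      refine Ideal.span_le.mpr ?_ hf
      rintro p hp
      rcases hp with rfl | rfl <;>
        simp [RingHom.mem_ker, ha, hb])

/-- The Lagrange interpolant `λ_{a,b} ∈ R'_q`. -/
def lag (q n : ℕ) (a b : ZMod q) : Rq q n :=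
  Ideal.Quotient.mk _ (MvPolynomial.C (((n : ZMod q) ^ 2)⁻¹) *
    ∑ i ∈ Finset.range n, ∑ j ∈ Finset.range n,
      MvPolynomial.C (a⁻¹ ^ i * b⁻¹ ^ j) * (X 0 ^ i * X 1 ^ j))

/-- The set `E` of points `(a,b)` with `a^n = b^n = 1`, as a finset. -/
def Efin (q n : ℕ) [NeZero q] : Finset (ZMod q × ZMod q) :=
  Finset.univ.filter fun p => p.1 ^ n = 1 ∧ p.2 ^ n = 1

/-- Evaluation at an arbitrary point of `(ℤ/qℤ)²` (zero outside `E`). -/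
def evAt (q n : ℕ) (p : ZMod q × ZMod q) (f : Rq q n) : ZMod q :=
  if h : p.1 ^ n = 1 ∧ p.2 ^ n = 1 then ev q n p.1 p.2 h.1 h.2 f else 0

/-- Componentwise evaluation of a quaternion of `𝔸_q` at a point of `E`. -/
def qevAt (q n : ℕ) (p : ZMod q × ZMod q) (F : ℍ[Rq q n, 1, 1]) : ℍ[ZMod q, 1, 1] :=
  ⟨evAt q n p F.re, evAt q n p F.imI, evAt q n p F.imJ, evAt q n p F.imK⟩

/-- The central (scalar) quaternion attached to `s ∈ R'_q`. -/
def cen (q n : ℕ) (s : Rq q n) : ℍ[Rq q n, 1, 1] :=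
  algebraMap (Rq q n) ℍ[Rq q n, 1, 1] s

/-- A quaternion over `ℤ/qℤ` regarded as a constant quaternion of `𝔸_q`. -/
def constQ (q n : ℕ) (w : ℍ[ZMod q, 1, 1]) : ℍ[Rq q n, 1, 1] :=
  ⟨Ideal.Quotient.mk _ (MvPolynomial.C w.re), Ideal.Quotient.mk _ (MvPolynomial.C w.imI),
   Ideal.Quotient.mk _ (MvPolynomial.C w.imJ), Ideal.Quotient.mk _ (MvPolynomial.C w.imK)⟩

/-- The Hamming weight of `ρ(F)`: the number of nonzero components, over all points of `E`,
among the four quaternion components of the evaluation of `F`. -/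
def hw (q n : ℕ) [NeZero q] (F : ℍ[Rq q n, 1, 1]) : ℕ :=
  ∑ p ∈ Efin q n,
    ((if (qevAt q n p F).re ≠ 0 then 1 else 0) +
     (if (qevAt q n p F).imI ≠ 0 then 1 else 0) +
     (if (qevAt q n p F).imJ ≠ 0 then 1 else 0) +
     (if (qevAt q n p F).imK ≠ 0 then 1 else 0))
/-- The sum of the powers `(c⁻¹ c')^i`, for `i < n`, of the quotient of two `n`-th roots of unity
is `n` if they agree and `0` otherwise. -/
theorem sum_inv_pow_mul_pow {K : Type*} [Field K] [DecidableEq K] {n : ℕ} {c c' : K} (hn : n ≠ 0)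
    (hc : c ^ n = 1) (hc' : c' ^ n = 1) :
    ∑ i ∈ Finset.range n, c⁻¹ ^ i * c' ^ i = if c' = c then (n : K) else 0 := by
  have hc0 : c ≠ 0 := by
    rintro rfl
    simp [hn] at hc
  simp only [← mul_pow]
  split_ifs with h
  · simp [h, hc0]
  · have hne : c⁻¹ * c' - 1 ≠ 0 := fun h0 =>
      h ((inv_mul_eq_one₀ hc0).mp (sub_eq_zero.mp h0)).symm
    refine (mul_eq_zero.mp ?_).resolve_right hne
    rw [geom_sum_mul, mul_pow, inv_pow, hc, hc', inv_one, one_mul, sub_self]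

theorem ZMod.natCast_ne_zero_of_dvd_sub_one {q n : ℕ} [Fact q.Prime] (hn : n ∣ q - 1) :
    (n : ZMod q) ≠ 0 := by
  have hq := (Fact.out : q.Prime).two_le
  intro h
  have h1 := Nat.le_of_dvd (by omega) (((ZMod.natCast_eq_zero_iff n q).mp h).trans hn)
  omega

theorem ev_lag (q n : ℕ) (a b a' b' : ZMod q) (ha' : a' ^ n = 1) (hb' : b' ^ n = 1) :
    ev q n a' b' ha' hb' (lag q n a b) = ((n : ZMod q) ^ 2)⁻¹ *
      ((∑ i ∈ Finset.range n, a⁻¹ ^ i * a' ^ i) * ∑ j ∈ Finset.range n, b⁻¹ ^ j * b' ^ j) := by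
  simp only [ev, lag, Ideal.Quotient.lift_mk, map_mul, map_sum, map_pow, eval_C, eval_X,
    Matrix.cons_val_zero, Matrix.cons_val_one, Finset.sum_mul_sum]
  exact congrArg _ <| Finset.sum_congr rfl fun i _ => Finset.sum_congr rfl fun j _ =>
    mul_mul_mul_comm _ _ _ _

/-- Delta property of the Lagrange interpolants: for `(a,b), (a',b') ∈ E`,
the evaluation `ev_{a',b'}(λ_{a,b})` equals `1` if `(a',b') = (a,b)` and `0` otherwise. -/
theorem stmt9 (q n : ℕ) [Fact q.Prime] (hn : n ∣ q - 1) (hnpos : 0 < n)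
    (a b a' b' : ZMod q) (ha : a ^ n = 1) (hb : b ^ n = 1)
    (ha' : a' ^ n = 1) (hb' : b' ^ n = 1) :
    ev q n a' b' ha' hb' (lag q n a b) = if (a', b') = (a, b) then 1 else 0 := by
  have hn0 := ZMod.natCast_ne_zero_of_dvd_sub_one hn
  rw [ev_lag, sum_inv_pow_mul_pow hnpos.ne' ha ha', sum_inv_pow_mul_pow hnpos.ne' hb hb']
  by_cases h₁ : a' = a <;> by_cases h₂ : b' = b <;> simp [h₁, h₂, ← sq, hn0]
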